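/- Let X be a countable set and equip the group Sym(X) of all bijections of X with the permutation topology, i.e., the topology of pointwise convergence where X is discrete, for which the sets {g ∈ Sym(X) : g(a) = f(a) for all a ∈ A}, with f ∈ Sym(X) and A ⊆ X finite, form a basis. Let Γ be a subgroup of Sym(X) which is closed in this topology. Then there exists a relational first-order language L and an L-structure on the universe X which is ultrahomogeneous and whose automorphism group, viewed as a subgroup of Sym(X), is exactly Γ. -/

import Mathlib

/-- The permutation topology on `Sym(X)`: the topology of pointwise convergence,
where `X` carries the discrete topology. -/
def permTop (X : Type*) : TopologicalSpace (Equiv.Perm X) :=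
  letI : TopologicalSpace X := ⊥
  TopologicalSpace.induced (fun g : Equiv.Perm X => (g : X → X)) inferInstance

/-! For each `n`, take a relation symbol for every orbit of `Γ` on the `n`-tuples of `X`, holding
exactly on that orbit. A finite partial isomorphism sends an enumeration of its domain to a tuple in
the same orbit, so it is the restriction of an element of `Γ`, which is an automorphism. In the same
way an automorphism agrees with an element of `Γ` on each finite set, that is, it lies in the
closure of `Γ`. -/

open Set Topology FirstOrder FirstOrder.Language.Structure

universe u v

theorem mem_closure_permTop_iff {X : Type*} {S : Set (Equiv.Perm X)} {f : Equiv.Perm X} :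
    f ∈ closure[permTop X] S ↔ ∀ s : Set X, s.Finite → ∃ g ∈ S, EqOn g f s := by
  let : TopologicalSpace X := ⊥
  have : DiscreteTopology X := ⟨rfl⟩
  let := permTop X
  have hcoe : IsInducing (fun g : Equiv.Perm X ↦ (g : X → X)) := ⟨rfl⟩
  have hbasis : (𝓝 f).HasBasis Set.Finite fun s ↦ {g : Equiv.Perm X | EqOn g f s} := by
    rw [hcoe.nhds_eq_comap, nhds_pi]
    simp only [nhds_discrete]
    exact (Filter.hasBasis_pi_pure f).comap _
  exact mem_closure_iff_nhds_basis hbasis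

/-- The canonical relational language of an action of `G` on `X`: its `n`-ary relation symbols are
the orbits of `G` on `n`-tuples. -/
def orbitLanguage (G : Type v) (X : Type u) [Group G] [MulAction G X] :
    FirstOrder.Language.{u, u} where
  Functions _ := PEmpty
  Relations n := MulAction.orbitRel.Quotient G (Fin n → X)

namespace orbitLanguage

variable {G : Type v} {X : Type u} [Group G] [MulAction G X]

instance isRelational : (orbitLanguage G X).IsRelational :=
  fun _ ↦ inferInstanceAs (IsEmpty PEmpty)

/-- The canonical structure of an action of `G` on `X`: a relation symbol holds of exactly the
tuples in the orbit that it names. -/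
instance structureOfAction : (orbitLanguage G X).Structure X where
  funMap := isEmptyElim
  RelMap r x := ⟦x⟧ = r

theorem relMap_iff {n : ℕ} {r : MulAction.orbitRel.Quotient G (Fin n → X)} {x : Fin n → X} :
    RelMap (L := orbitLanguage G X) r x ↔ ⟦x⟧ = r :=
  Iff.rfl

theorem exists_eqOn_smul {M : Type*} [(orbitLanguage G X).Structure M]
    (i : M ↪[orbitLanguage G X] X) (φ : M →[orbitLanguage G X] X) {s : Set M} (hs : s.Finite) :
    ∃ g : G, EqOn (fun m ↦ g • i m) φ s := by
  obtain ⟨n, a, -, rfl⟩ := hs.fin_param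
  have hφa : (⟦φ ∘ a⟧ : MulAction.orbitRel.Quotient G (Fin n → X)) = ⟦i ∘ a⟧ :=
    relMap_iff.1 (φ.map_rel _ _ ((i.map_rel _ _).1 (relMap_iff.2 rfl)))
  obtain ⟨g, hg⟩ := Quotient.exact hφa
  exact ⟨g, forall_mem_range.2 (congrFun hg)⟩

theorem exists_equiv_iff_forall_finite {f : Equiv.Perm X} :
    (∃ e : X ≃[orbitLanguage G X] X, e.toEquiv = f) ↔
      ∀ s : Set X, s.Finite → ∃ g : G, EqOn (g • ·) f s := by
  constructor
  · rintro ⟨e, rfl⟩ s hs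
    exact exists_eqOn_smul (Language.Embedding.refl _ X) e.toHom hs
  · intro hf
    refine ⟨⟨f, isEmptyElim, fun {n} r x ↦ ?_⟩, rfl⟩
    obtain ⟨g, hg⟩ := hf (range x) (finite_range x)
    have hfx : g • x = f ∘ x := funext fun k ↦ hg (mem_range_self k)
    have horbit : (⟦f ∘ x⟧ : MulAction.orbitRel.Quotient G (Fin n → X)) = ⟦x⟧ :=
      hfx ▸ MulAction.orbitRel.Quotient.quotient_smul_eq
    exact Eq.congr_left horbit

theorem exists_equiv_iff_mem_closure {f : Equiv.Perm X} :
    (∃ e : X ≃[orbitLanguage G X] X, e.toEquiv = f) ↔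
      f ∈ closure[permTop X] (range (MulAction.toPerm : G → Equiv.Perm X)) := by
  rw [exists_equiv_iff_forall_finite, mem_closure_permTop_iff]
  simp only [exists_range_iff]
  rfl

theorem isUltrahomogeneous : (orbitLanguage G X).IsUltrahomogeneous X := by
  intro S hS φ
  have : Finite S := hS.finite
  obtain ⟨g, hg⟩ := exists_eqOn_smul S.subtype φ.toHom finite_univ
  obtain ⟨e, he⟩ : ∃ e : X ≃[orbitLanguage G X] X, e.toEquiv = MulAction.toPerm g :=
    exists_equiv_iff_forall_finite.2 fun s _ ↦ ⟨g, eqOn_refl _ s⟩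
  refine ⟨e, Language.Embedding.ext fun x ↦ ?_⟩
  exact (hg (mem_univ x)).symm.trans (DFunLike.congr_fun he (x : X)).symm

end orbitLanguage

theorem stmt_6_general {X : Type u} (Γ : Subgroup (Equiv.Perm X))
    (hclosed : @IsClosed _ (permTop X) (Γ : Set (Equiv.Perm X))) :
    ∃ (L : FirstOrder.Language.{u, u}) (S : L.Structure X),
      L.IsRelational ∧
      @FirstOrder.Language.IsUltrahomogeneous L X S ∧
      ∀ f : Equiv.Perm X,
        (∃ e : @FirstOrder.Language.Equiv L X X S S, e.toEquiv = f) ↔ f ∈ Γ := by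
  have hrange : range (MulAction.toPerm : Γ → Equiv.Perm X) = Γ := Subtype.range_coe
  refine ⟨orbitLanguage Γ X, inferInstance, inferInstance, orbitLanguage.isUltrahomogeneous,
    fun f ↦ ?_⟩
  rw [orbitLanguage.exists_equiv_iff_mem_closure, hrange,
    @IsClosed.closure_eq _ (permTop X) _ hclosed, SetLike.mem_coe]

/-- For every countable set `X` and every subgroup `Γ ≤ Sym(X)` closed in the permutation
topology, there is a relational first-order language `L` and an ultrahomogeneous
`L`-structure on `X` whose automorphism group, as a subgroup of `Sym(X)`, is exactly `Γ`. -/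
theorem stmt_6 {X : Type u} [Countable X] (Γ : Subgroup (Equiv.Perm X))
    (hclosed : @IsClosed _ (permTop X) (Γ : Set (Equiv.Perm X))) :
    ∃ (L : FirstOrder.Language.{u, u}) (S : L.Structure X),
      L.IsRelational ∧
      @FirstOrder.Language.IsUltrahomogeneous L X S ∧
      ∀ f : Equiv.Perm X,
        (∃ e : @FirstOrder.Language.Equiv L X X S S, e.toEquiv = f) ↔ f ∈ Γ := by
  exact stmt_6_general Γ hclosed
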